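/- For every (m,n)-Dyck path π, Σ_{p ∈ v_*(π)} k(p) = Σ_{v ∈ v^*(π)} k(v), i.e. the sum of k over the inner vertices of π equals the sum of k over the outer vertices of π excluding the outer vertex most distant from the diagonal. -/

import Mathlib

/-- An `(m,n)`-Dyck path is encoded by the weakly increasing sequence `y 1 ≤ … ≤ y m = n`
of heights of its east steps (with the convention `y 0 = 0`), subject to `m * y c ≥ n * c`.
The north steps of the path are the pairs `(c, j)` with `0 ≤ c < m` and
`y c ≤ j < y (c+1)`, representing the unit north step from `(c, j)` to `(c, j+1)`. -/
def northSteps (m n : ℕ) (y : ℕ → ℕ) : Finset (ℕ × ℕ) :=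
  (Finset.range m ×ˢ Finset.range n).filter fun s => y s.1 ≤ s.2 ∧ s.2 < y (s.1 + 1)

/-- The east steps of the path are indexed by `c` with `1 ≤ c ≤ m`; the east step `c`
goes from `(c-1, y c)` to `(c, y c)`. -/
def eastSteps (m : ℕ) : Finset ℕ := Finset.Icc 1 m

/-- `o(π)`: pairs `(s₁, s₂)` of an east step `s₁` and a north step `s₂` of the path
with `s₁` occurring earlier than (to the left of) `s₂` along the path. -/
def oSet (m n : ℕ) (y : ℕ → ℕ) : Finset (ℕ × ℕ × ℕ) :=
  (eastSteps m ×ˢ northSteps m n y).filter fun p => p.1 ≤ p.2.1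

/-- `i(π)`: lattice points `(a,b)` strictly between the path and the diagonal:
`1 ≤ a ≤ m-1`, `m·b > n·a` and `b < y a`. -/
def iSet (m n : ℕ) (y : ℕ → ℕ) : Finset (ℕ × ℕ) :=
  (Finset.Icc 1 (m - 1) ×ˢ Finset.range n).filter fun p =>
    n * p.1 < m * p.2 ∧ p.2 < y p.1

/-- `k(p)` for a lattice point `p = (a,b)`: the number of north steps of the path whose
interior is intersected by the line through `p` parallel to the diagonal,
`m·(y−b) = n·(x−a)`.  A north step `(c,j)` is intersected iff
`m·j < m·b + n·(c−a) < m·(j+1)`. -/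
def kNum (m n : ℕ) (y : ℕ → ℕ) (p : ℕ × ℕ) : ℕ :=
  ((northSteps m n y).filter fun s =>
    (m : ℤ) * s.2 < (m : ℤ) * p.2 + (n : ℤ) * ((s.1 : ℤ) - (p.1 : ℤ)) ∧
    (m : ℤ) * p.2 + (n : ℤ) * ((s.1 : ℤ) - (p.1 : ℤ)) < (m : ℤ) * ((s.2 : ℤ) + 1)).card

/-- `h₊(π)`: the number of pairs `(s₁, s₂) ∈ o(π)` such that some line parallel to the
diagonal meets the interiors of both steps.  For the east step `s₁ = c₁` (at height
`y c₁`) and the north step `s₂ = (c₂, j)` this overlap condition reads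
`m·(y c₁) − n·c₁ < m·(j+1) − n·c₂` and `m·j − n·c₂ < m·(y c₁) − n·(c₁−1)`. -/
def hplus (m n : ℕ) (y : ℕ → ℕ) : ℕ :=
  ((oSet m n y).filter fun p =>
    (m : ℤ) * (y p.1 : ℤ) - (n : ℤ) * (p.1 : ℤ)
        < (m : ℤ) * ((p.2.2 : ℤ) + 1) - (n : ℤ) * (p.2.1 : ℤ) ∧
    (m : ℤ) * (p.2.2 : ℤ) - (n : ℤ) * (p.2.1 : ℤ)
        < (m : ℤ) * (y p.1 : ℤ) - (n : ℤ) * ((p.1 : ℤ) - 1)).card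

/-- The inner vertices of the path: lattice points at which an east step is immediately
followed by a north step, i.e. points `(c, y c)` with `1 ≤ c ≤ m−1` and `y c < y (c+1)`. -/
def innerV (m n : ℕ) (y : ℕ → ℕ) : Finset (ℕ × ℕ) :=
  (Finset.range (m + 1) ×ˢ Finset.range (n + 1)).filter fun v =>
    1 ≤ v.1 ∧ v.1 ≤ m - 1 ∧ v.2 = y v.1 ∧ y v.1 < y (v.1 + 1)

/-- The outer vertices of the path: lattice points at which a north step is immediately
followed by an east step, i.e. points `(c, y (c+1))` with `0 ≤ c ≤ m−1` and
`y c < y (c+1)`. -/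
def outerV (m n : ℕ) (y : ℕ → ℕ) : Finset (ℕ × ℕ) :=
  (Finset.range (m + 1) ×ˢ Finset.range (n + 1)).filter fun v =>
    v.1 ≤ m - 1 ∧ v.2 = y (v.1 + 1) ∧ y v.1 < y (v.1 + 1)

/-- `v^*(π)`: the outer vertices of the path excluding the (unique) outer vertex most
distant from the diagonal, i.e. those outer vertices `v` for which some outer vertex `w`
satisfies `m·y(w) − n·x(w) > m·y(v) − n·x(v)`. -/
def vstar (m n : ℕ) (y : ℕ → ℕ) : Finset (ℕ × ℕ) :=
  (outerV m n y).filter fun v => ∃ w ∈ outerV m n y,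
    (m : ℤ) * (v.2 : ℤ) - (n : ℤ) * (v.1 : ℤ) < (m : ℤ) * (w.2 : ℤ) - (n : ℤ) * (w.1 : ℤ)

/-!
Measure the height of a point `(a, b)` over the diagonal by its level `m * b - n * a`. The vertical
part of the path on a line `x = c` occupies an interval of levels, and `k(p)` counts the intervals
that contain the level of `p` in their interior, among those lines whose lattice points have levels
not congruent to that of `p` modulo `m`. On two incongruent vertical lines the levels of lattice
points are distinct, so their intervals have no common endpoint; hence they overlap iff exactly one
of the two left endpoints is interior to the other interval, and likewise for the right endpoints.
Counting the overlapping pairs of intervals in both ways shows that `k` has the same sum over the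
lower ends of the vertical parts as over the upper ends. The lower end `(0, 0)` and the upper ends
of maximal level contribute `0`, and what remains is `v_*(π)` and `v^*(π)`.
-/

open Finset

section DoubleCounting

variable {ι α M : Type*}

theorem sum_sum_eq_sum_sum_of_add_swap_eq [AddCommMonoid M] [IsAddTorsionFree M] (s : Finset ι)
    (f g : ι → ι → M) (h : ∀ i ∈ s, ∀ j ∈ s, f i j + f j i = g i j + g j i) :
    ∑ i ∈ s, ∑ j ∈ s, f i j = ∑ i ∈ s, ∑ j ∈ s, g i j := by
  have two_nsmul_sum_sum (f : ι → ι → M) :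
      2 • ∑ i ∈ s, ∑ j ∈ s, f i j = ∑ i ∈ s, ∑ j ∈ s, (f i j + f j i) := by
    rw [two_nsmul]
    nth_rw 2 [sum_comm]
    simp only [sum_add_distrib]
  apply nsmul_right_injective two_ne_zero
  simp only [two_nsmul_sum_sum]
  exact sum_congr rfl fun i hi => sum_congr rfl fun j hj => h i hi j hj

variable [LinearOrder α]

theorem ite_left_mem_Ioo_add_ite_left_mem_Ioo {a a' b b' : α} (ha : a ≤ a') (hb : b ≤ b')
    (hab : a ≠ b) :
    (if a ∈ Set.Ioo b b' then 1 else 0) + (if b ∈ Set.Ioo a a' then 1 else 0) =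
      if a < b' ∧ b < a' then 1 else 0 := by
  simp only [Set.mem_Ioo]
  grind

theorem ite_right_mem_Ioo_add_ite_right_mem_Ioo {a a' b b' : α} (ha : a ≤ a') (hb : b ≤ b')
    (hab : a' ≠ b') :
    (if a' ∈ Set.Ioo b b' then 1 else 0) + (if b' ∈ Set.Ioo a a' then 1 else 0) =
      if a < b' ∧ b < a' then 1 else 0 := by
  simp only [Set.mem_Ioo]
  grind

theorem sum_card_left_mem_Ioo_eq_sum_card_right_mem_Ioo (s : Finset ι) {l u : ι → α}
    {r : ι → ι → Prop} [DecidableRel r] (hlu : ∀ i ∈ s, l i ≤ u i)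
    (hr : ∀ i j, r i j ↔ r j i) (hl : ∀ i j, r i j → l i ≠ l j) (hu : ∀ i j, r i j → u i ≠ u j) :
    ∑ i ∈ s, #{j ∈ s | r i j ∧ l i ∈ Set.Ioo (l j) (u j)} =
      ∑ i ∈ s, #{j ∈ s | r i j ∧ u i ∈ Set.Ioo (l j) (u j)} := by
  simp only [card_filter]
  refine sum_sum_eq_sum_sum_of_add_swap_eq s _ _ fun i hi j hj => ?_
  by_cases hij : r i j
  · simp only [hij, (hr i j).1 hij, true_and]
    rw [ite_left_mem_Ioo_add_ite_left_mem_Ioo (hlu i hi) (hlu j hj) (hl i j hij),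
      ite_right_mem_Ioo_add_ite_right_mem_Ioo (hlu i hi) (hlu j hj) (hu i j hij)]
  · simp only [hij, mt (hr i j).2 hij, false_and, if_false]

end DoubleCounting

section LatticePath

/-- The signed height `m * b - n * a` of the lattice point `(a, b)` over the diagonal; its level
sets are the lines parallel to the diagonal. -/
def level (m n : ℕ) (p : ℕ × ℕ) : ℤ := m * p.2 - n * p.1

/-- The abscissas `c` of the vertical lines carrying north steps of the path, which run from the
lower end `(c, y c)` to the upper end `(c, y (c + 1))`. -/
def ascents (m : ℕ) (y : ℕ → ℕ) : Finset ℕ := {c ∈ range m | y c < y (c + 1)}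

/-- The abscissas `c` at which the line through `p` parallel to the diagonal intersects a north
step: it passes strictly between the two ends of the vertical part of the path over `c`, and the
point where it does, at height `p.2 + n * (c - p.1) / m`, is not a lattice point. -/
noncomputable def crossedColumns (m n : ℕ) (y : ℕ → ℕ) (p : ℕ × ℕ) : Finset ℕ :=
  {c ∈ ascents m y | ¬ n * p.1 ≡ n * c [MOD m] ∧
    level m n p ∈ Set.Ioo (level m n (c, y c)) (level m n (c, y (c + 1)))}

variable {m n : ℕ} {y : ℕ → ℕ} {p q : ℕ × ℕ} {a b b' c j : ℕ}

theorem mem_ascents : c ∈ ascents m y ↔ c < m ∧ y c < y (c + 1) := by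
  simp only [ascents, mem_filter, mem_range]

theorem modEq_of_level_eq (h : level m n p = level m n q) : n * p.1 ≡ n * q.1 [MOD m] := by
  rw [← Int.natCast_modEq_iff, Int.modEq_iff_dvd]
  refine ⟨q.2 - p.2, ?_⟩
  simp only [level] at h
  push_cast
  linarith

theorem level_le_level (h : b ≤ b') : level m n (a, b) ≤ level m n (a, b') := by
  unfold level
  gcongr

theorem lt_of_level_lt_level (h : level m n (a, b) < level m n (a, b')) : b < b' :=
  lt_of_not_ge fun hb => h.not_ge (level_le_level hb)

theorem natCast_dvd_level_add_iff : (m : ℤ) ∣ level m n p + n * c ↔ n * p.1 ≡ n * c [MOD m] := by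
  rw [← Int.natCast_modEq_iff, Int.modEq_iff_dvd,
    show level m n p + n * c = m * p.2 + (↑(n * c) - ↑(n * p.1)) by
      simp only [level]; push_cast; ring]
  exact dvd_add_right (dvd_mul_right _ _)

theorem mem_Ioo_level_iff : level m n p ∈ Set.Ioo (level m n (c, j)) (level m n (c, j + 1)) ↔
    (m : ℤ) * j < level m n p + n * c ∧ level m n p + n * c < m * (j + 1) := by
  simp only [Set.mem_Ioo, level]
  push_cast
  constructor <;> rintro ⟨h₁, h₂⟩ <;> constructor <;> linarith

theorem eq_of_mem_Ioo_level_of_mem_Ioo_level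
    (hb : level m n p ∈ Set.Ioo (level m n (c, b)) (level m n (c, b + 1)))
    (hb' : level m n p ∈ Set.Ioo (level m n (c, b')) (level m n (c, b' + 1))) : b = b' := by
  have h₁ := lt_of_level_lt_level (hb.1.trans hb'.2)
  have h₂ := lt_of_level_lt_level (hb'.1.trans hb.2)
  omega

theorem not_modEq_of_mem_Ioo_level (hm : 0 < m)
    (h : level m n p ∈ Set.Ioo (level m n (c, j)) (level m n (c, j + 1))) :
    ¬ n * p.1 ≡ n * c [MOD m] := by
  rw [← natCast_dvd_level_add_iff, ← Int.exists_lt_and_lt_iff_not_dvd _ (by exact_mod_cast hm)]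
  exact ⟨j, mem_Ioo_level_iff.1 h⟩

theorem exists_mem_Ioo_level (hm : 0 < m) (hmod : ¬ n * p.1 ≡ n * c [MOD m])
    (h : level m n p ∈ Set.Ioo (level m n (c, b)) (level m n (c, b'))) :
    ∃ j, b ≤ j ∧ j < b' ∧ level m n p ∈ Set.Ioo (level m n (c, j)) (level m n (c, j + 1)) := by
  rw [← natCast_dvd_level_add_iff,
    ← Int.exists_lt_and_lt_iff_not_dvd _ (by exact_mod_cast hm)] at hmod
  obtain ⟨k, hk, hk'⟩ := hmod
  have hbk : (b : ℤ) < k + 1 := by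
    refine lt_of_mul_lt_mul_left (lt_trans ?_ hk') (Int.natCast_nonneg m)
    simpa only [level, sub_lt_iff_lt_add] using h.1
  lift k to ℕ using by omega
  have hj := mem_Ioo_level_iff.2 ⟨hk, hk'⟩
  exact ⟨k, by omega, lt_of_level_lt_level (hj.1.trans h.2), hj⟩

theorem kNum_eq_card_filter_northSteps (m n : ℕ) (y : ℕ → ℕ) (p : ℕ × ℕ) :
    kNum m n y p = #{s ∈ northSteps m n y |
      level m n p ∈ Set.Ioo (level m n s) (level m n (s.1, s.2 + 1))} := by
  unfold kNum
  congr! 2 with s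
  rw [mem_Ioo_level_iff, level]
  ring_nf

theorem mem_northSteps (hyn : ∀ c ≤ m, y c ≤ n) :
    (c, j) ∈ northSteps m n y ↔ c < m ∧ y c ≤ j ∧ j < y (c + 1) := by
  simp only [northSteps, mem_filter, mem_product, mem_range]
  have := hyn (c + 1)
  omega

theorem kNum_eq_card_crossedColumns (hyn : ∀ c ≤ m, y c ≤ n) (p : ℕ × ℕ) :
    kNum m n y p = #(crossedColumns m n y p) := by
  rw [kNum_eq_card_filter_northSteps]
  refine card_nbij Prod.fst ?mapsTo ?injOn ?surjOn
  case mapsTo =>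
    rintro ⟨c, j⟩ hs
    obtain ⟨hcj, hp⟩ := mem_filter.1 hs
    obtain ⟨hc, hj, hj'⟩ := (mem_northSteps hyn).1 hcj
    exact mem_filter.2 ⟨mem_ascents.2 ⟨hc, hj.trans_lt hj'⟩,
      not_modEq_of_mem_Ioo_level (Nat.zero_lt_of_lt hc) hp,
      (level_le_level hj).trans_lt hp.1, hp.2.trans_le (level_le_level hj')⟩
  case injOn =>
    rintro ⟨c, j⟩ hs ⟨_, j'⟩ hs' rfl
    exact congrArg (c, ·)
      (eq_of_mem_Ioo_level_of_mem_Ioo_level (mem_filter.1 hs).2 (mem_filter.1 hs').2)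
  case surjOn =>
    intro c hc
    obtain ⟨hc, hmod, hp⟩ := mem_filter.1 hc
    have hcm : c < m := (mem_ascents.1 hc).1
    obtain ⟨j, hj, hj', hpj⟩ := exists_mem_Ioo_level (Nat.zero_lt_of_lt hcm) hmod hp
    exact ⟨(c, j), mem_filter.2 ⟨(mem_northSteps hyn).2 ⟨hcm, hj, hj'⟩, hpj⟩, rfl⟩

theorem sum_kNum_lower_eq_sum_kNum_upper (hyn : ∀ c ≤ m, y c ≤ n) :
    ∑ c ∈ ascents m y, kNum m n y (c, y c) = ∑ c ∈ ascents m y, kNum m n y (c, y (c + 1)) := by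
  simp only [kNum_eq_card_crossedColumns hyn]
  exact sum_card_left_mem_Ioo_eq_sum_card_right_mem_Ioo (ascents m y)
    (fun c hc => level_le_level (mem_ascents.1 hc).2.le)
    (fun _ _ => not_congr Nat.ModEq.comm)
    (fun _ _ => mt modEq_of_level_eq) (fun _ _ => mt modEq_of_level_eq)

theorem kNum_eq_zero_of_level_le_lower (hyn : ∀ c ≤ m, y c ≤ n)
    (hp : ∀ c ∈ ascents m y, level m n p ≤ level m n (c, y c)) : kNum m n y p = 0 := by
  rw [kNum_eq_card_crossedColumns hyn, card_eq_zero, crossedColumns, filter_eq_empty_iff]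
  exact fun c hc h => (hp c hc).not_gt h.2.1

theorem kNum_eq_zero_of_upper_le_level (hyn : ∀ c ≤ m, y c ≤ n)
    (hp : ∀ c ∈ ascents m y, level m n (c, y (c + 1)) ≤ level m n p) : kNum m n y p = 0 := by
  rw [kNum_eq_card_crossedColumns hyn, card_eq_zero, crossedColumns, filter_eq_empty_iff]
  exact fun c hc h => (hp c hc).not_gt h.2.2

theorem innerV_eq_image (hyn : ∀ c ≤ m, y c ≤ n) :
    innerV m n y = ((ascents m y).erase 0).image fun c => (c, y c) := by
  ext ⟨a, b⟩
  simp only [innerV, mem_filter, mem_product, mem_range, mem_image, mem_erase, mem_ascents,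
    Prod.mk.injEq]
  have := hyn a
  grind

theorem outerV_eq_image (hm : 0 < m) (hyn : ∀ c ≤ m, y c ≤ n) :
    outerV m n y = (ascents m y).image fun c => (c, y (c + 1)) := by
  ext ⟨a, b⟩
  simp only [outerV, mem_filter, mem_product, mem_range, mem_image, mem_ascents, Prod.mk.injEq]
  have := hyn (a + 1)
  grind

theorem sum_kNum_innerV (hy0 : y 0 = 0) (hyn : ∀ c ≤ m, y c ≤ n)
    (habove : ∀ c, 1 ≤ c → c < m → n * c ≤ m * y c) :
    ∑ p ∈ innerV m n y, kNum m n y p = ∑ c ∈ ascents m y, kNum m n y (c, y c) := by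
  rw [innerV_eq_image hyn, sum_image fun _ _ _ _ h => congrArg Prod.fst h]
  refine sum_erase _ (kNum_eq_zero_of_level_le_lower hyn fun c hc => ?_)
  rcases Nat.eq_zero_or_pos c with rfl | hc0
  · exact le_rfl
  · have h : (n : ℤ) * c ≤ m * y c := by exact_mod_cast habove c hc0 (mem_ascents.1 hc).1
    simpa [level, hy0] using h

theorem sum_kNum_vstar (hm : 0 < m) (hyn : ∀ c ≤ m, y c ≤ n) :
    ∑ v ∈ vstar m n y, kNum m n y v = ∑ c ∈ ascents m y, kNum m n y (c, y (c + 1)) := by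
  have sum_vstar_eq_sum_outerV :
      ∑ v ∈ vstar m n y, kNum m n y v = ∑ v ∈ outerV m n y, kNum m n y v := by
    refine sum_filter_of_ne fun v _ hv => ?_
    contrapose! hv
    refine kNum_eq_zero_of_upper_le_level hyn fun c hc => hv (c, y (c + 1)) ?_
    rw [outerV_eq_image hm hyn]
    exact mem_image_of_mem _ hc
  rw [sum_vstar_eq_sum_outerV, outerV_eq_image hm hyn,
    sum_image fun _ _ _ _ h => congrArg Prod.fst h]

theorem sum_kNum_innerV_eq_sum_kNum_vstar_general (hm : 0 < m) (hy0 : y 0 = 0)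
    (hyn : ∀ c ≤ m, y c ≤ n) (habove : ∀ c, 1 ≤ c → c < m → n * c ≤ m * y c) :
    ∑ p ∈ innerV m n y, kNum m n y p = ∑ v ∈ vstar m n y, kNum m n y v :=
  calc ∑ p ∈ innerV m n y, kNum m n y p
    _ = ∑ c ∈ ascents m y, kNum m n y (c, y c) := sum_kNum_innerV hy0 hyn habove
    _ = ∑ c ∈ ascents m y, kNum m n y (c, y (c + 1)) := sum_kNum_lower_eq_sum_kNum_upper hyn
    _ = ∑ v ∈ vstar m n y, kNum m n y v := (sum_kNum_vstar hm hyn).symm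

end LatticePath

/-- For every `(m,n)`-Dyck path `π`, the sum of `k` over the inner vertices
of `π` equals the sum of `k` over the outer vertices of `π` excluding the outer vertex
most distant from the diagonal: `Σ_{p ∈ v_*(π)} k(p) = Σ_{v ∈ v^*(π)} k(v)`. -/
theorem sum_kNum_innerV_eq_sum_kNum_vstar (m n : ℕ) (hm : 0 < m) (hn : 0 < n)
    (hcop : Nat.Coprime m n) (y : ℕ → ℕ) (hy0 : y 0 = 0)
    (hmono : ∀ c < m, y c ≤ y (c + 1)) (hym : y m = n)
    (habove : ∀ c, 1 ≤ c → c ≤ m → n * c ≤ m * y c) :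
    ∑ p ∈ innerV m n y, kNum m n y p = ∑ v ∈ vstar m n y, kNum m n y v := by
  have hy : MonotoneOn y (Set.Iic m) :=
    monotoneOn_of_le_add_one Set.ordConnected_Iic fun c _ _ hc => hmono c hc
  exact sum_kNum_innerV_eq_sum_kNum_vstar_general hm hy0
    (fun c hc => hym ▸ hy hc Set.self_mem_Iic hc) fun c h1 hc => habove c h1 hc.le
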